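/- Let t ≥ 1 and n ≥ t, and consider a red/blue edge-coloring of the complete graph on {1,…,N} with N ≥ (R(K_t,K_t) − 1)·n^2 + 1 containing no monochromatic ordered copy of P_n^t. Then there exist two monochromatic t-cliques X and Y of the same color such that the largest element of X equals the smallest element of Y and χ(X) ≥ χ(Y), where for a monochromatic t-clique Z, χ(Z) denotes the largest ℓ such that there is a monochromatic copy of P_ℓ^t (in the color of Z) whose last t vertices are the vertices of Z. -/

import Mathlib

/-- `χ i j` is the color of the edge `{i, j}` for `i < j`: `true` = red, `false` = blue.
The classical Ramsey property: every red/blue coloring of `K_N` contains a red `K_s`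
or a blue `K_n`. -/
def HasRamseyProp (s n N : ℕ) : Prop :=
  ∀ χ : Fin N → Fin N → Bool,
    (∃ f : Fin s → Fin N, StrictMono f ∧ ∀ i j : Fin s, i < j → χ (f i) (f j) = true) ∨
    (∃ f : Fin n → Fin N, StrictMono f ∧ ∀ i j : Fin n, i < j → χ (f i) (f j) = false)

/-- The classical Ramsey number `R(K_s, K_n)`. -/
noncomputable def ramsey (s n : ℕ) : ℕ := sInf {N | HasRamseyProp s n N}

/-- `X` is a `b`-monochromatic clique. -/
def MonoClique {N : ℕ} (χ : Fin N → Fin N → Bool) (b : Bool) (X : Finset (Fin N)) : Prop :=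
  ∀ a ∈ X, ∀ c ∈ X, a < c → χ a c = b

/-- There is a `b`-monochromatic ordered copy of `P_ℓ^t` whose last `t` vertices are
exactly the vertices of `X`. -/
def EndsAt {N : ℕ} (χ : Fin N → Fin N → Bool) (b : Bool) (t ℓ : ℕ)
    (X : Finset (Fin N)) : Prop :=
  ∃ f : Fin ℓ → Fin N, StrictMono f ∧
    (∀ i j : Fin ℓ, i < j → (j : ℕ) ≤ (i : ℕ) + t → χ (f i) (f j) = b) ∧
    (∀ x : Fin N, x ∈ X ↔ ∃ i : Fin ℓ, ℓ - t ≤ (i : ℕ) ∧ f i = x)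

/-- `χ(X)`: the largest `ℓ` such that some `b`-monochromatic copy of `P_ℓ^t` ends at the
`t`-clique `X`. -/
noncomputable def chiVal {N : ℕ} (χ : Fin N → Fin N → Bool) (b : Bool) (t : ℕ)
    (X : Finset (Fin N)) : ℕ :=
  sSup {ℓ | EndsAt χ b t ℓ X}

theorem ramsey_fin (s n : ℕ) : ∃ M : ℕ, ∀ (α : Type) [LinearOrder α] (c : α → α → Bool)
    (S : Finset α), M ≤ S.card →
    (∃ T ⊆ S, T.card = s ∧ ∀ a ∈ T, ∀ b ∈ T, a < b → c a b = true) ∨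
    (∃ T ⊆ S, T.card = n ∧ ∀ a ∈ T, ∀ b ∈ T, a < b → c a b = false) := by
  induction s generalizing n with
  | zero => exact ⟨0, fun α _ c S _ => Or.inl ⟨∅, by simp, by simp, by simp⟩⟩
  | succ s ihs =>
    induction n with
    | zero => exact ⟨0, fun α _ c S _ => Or.inr ⟨∅, by simp, by simp, by simp⟩⟩
    | succ n ihn =>
      obtain ⟨A, hA⟩ := ihs (n + 1)
      obtain ⟨B, hB⟩ := ihn
      refine ⟨A + B + 1, fun α _ c S hS => ?_⟩
      have hne : S.Nonempty := Finset.card_pos.mp (by omega)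
      set m := S.min' hne with hm
      have hmS : m ∈ S := S.min'_mem hne
      have hcard : (S.erase m).card = S.card - 1 := Finset.card_erase_of_mem hmS
      have hlt : ∀ x ∈ S.erase m, m < x := fun x hx => by
        rw [Finset.mem_erase] at hx
        exact lt_of_le_of_ne (S.min'_le x hx.2) (Ne.symm hx.1)
      have hsplit := Finset.card_filter_add_card_filter_not (s := S.erase m)
        (fun x => c m x = true)
      have ext : ∀ (col : Bool) (k : ℕ) (T : Finset α), T ⊆ (S.erase m).filter (fun x => c m x = col) →
          T.card = k → (∀ a ∈ T, ∀ b ∈ T, a < b → c a b = col) →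
          ∃ T ⊆ S, T.card = k + 1 ∧ ∀ a ∈ T, ∀ b ∈ T, a < b → c a b = col := by
        intro col k T hT hk hc
        have hT' : ∀ x ∈ T, x ∈ S.erase m ∧ c m x = col := fun x hx => by
          simpa using Finset.mem_filter.mp (hT hx)
        refine ⟨insert m T, ?_, ?_, ?_⟩
        · intro x hx
          rcases Finset.mem_insert.mp hx with rfl | hx
          · exact hmS
          · exact Finset.mem_of_mem_erase (hT' x hx).1
        · rw [Finset.card_insert_of_notMem, hk]
          intro h
          exact lt_irrefl _ (hlt m (hT' m h).1)
        · intro a ha b hb hab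
          rcases Finset.mem_insert.mp ha with rfl | ha <;>
            rcases Finset.mem_insert.mp hb with rfl | hb
          · exact absurd hab (lt_irrefl _)
          · exact (hT' b hb).2
          · exact absurd hab (not_lt_of_gt (hlt a (hT' a ha).1))
          · exact hc a ha b hb hab
      have sub : ∀ col : Bool, (S.erase m).filter (fun x => c m x = col) ⊆ S := fun col =>
        (Finset.filter_subset _ _).trans (Finset.erase_subset _ _)
      have hor : A ≤ ((S.erase m).filter (fun x => c m x = true)).card ∨
          B ≤ ((S.erase m).filter (fun x => c m x = false)).card := by
        simp only [Bool.not_eq_true] at hsplit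
        omega
      rcases hor with h | h
      · rcases hA α c _ h with ⟨T, hT, hk, hc⟩ | ⟨T, hT, hk, hc⟩
        · exact Or.inl (ext true s T hT hk hc)
        · exact Or.inr ⟨T, hT.trans (sub _), hk, hc⟩
      · rcases hB α c _ h with ⟨T, hT, hk, hc⟩ | ⟨T, hT, hk, hc⟩
        · exact Or.inl ⟨T, hT.trans (sub _), hk, hc⟩
        · exact Or.inr (ext false n T hT hk hc)

theorem ramsey_spec (s n : ℕ) : HasRamseyProp s n (ramsey s n) := by
  apply Nat.sInf_mem (s := {N | HasRamseyProp s n N})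
  obtain ⟨M, hM⟩ := ramsey_fin s n
  refine ⟨M, fun χ => ?_⟩
  rcases hM (Fin M) χ Finset.univ (by simp) with ⟨T, -, hk, hc⟩ | ⟨T, -, hk, hc⟩
  · exact Or.inl ⟨T.orderEmbOfFin hk, (T.orderEmbOfFin hk).strictMono, fun i j hij =>
      hc _ (T.orderEmbOfFin_mem hk i) _ (T.orderEmbOfFin_mem hk j)
        ((T.orderEmbOfFin hk).strictMono hij)⟩
  · exact Or.inr ⟨T.orderEmbOfFin hk, (T.orderEmbOfFin hk).strictMono, fun i j hij =>
      hc _ (T.orderEmbOfFin_mem hk i) _ (T.orderEmbOfFin_mem hk j)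
        ((T.orderEmbOfFin hk).strictMono hij)⟩

/-- The `t`-cliques of color `b` with largest element `v`. -/
def CliqueTop {N : ℕ} (χ : Fin N → Fin N → Bool) (b : Bool) (t : ℕ) (v : Fin N)
    (X : Finset (Fin N)) : Prop :=
  X.card = t ∧ MonoClique χ b X ∧ v ∈ X ∧ ∀ a ∈ X, a ≤ v

open Classical in
/-- The largest value of `chiVal` over `t`-cliques of color `b` with largest element `v`. -/
noncomputable def topVal {N : ℕ} (χ : Fin N → Fin N → Bool) (b : Bool) (t : ℕ) (v : Fin N) : ℕ :=
  (Finset.univ.filter (CliqueTop χ b t v)).sup (chiVal χ b t)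

/-- if `t ≥ 1`, `n ≥ t`, `N ≥ (R(K_t,K_t) − 1)·n² + 1` and a red/blue
coloring of `K_N` has no monochromatic ordered copy of `P_n^t`, then there are two
monochromatic `t`-cliques `X`, `Y` of the same color with `max X = min Y` and
`χ(X) ≥ χ(Y)`. -/
theorem stmt14 (t n N : ℕ) (ht : 1 ≤ t) (hn : t ≤ n)
    (hN : (ramsey t t - 1) * n ^ 2 + 1 ≤ N) (χ : Fin N → Fin N → Bool)
    (hno : ¬ ∃ (b : Bool) (f : Fin n → Fin N), StrictMono f ∧
      ∀ i j : Fin n, i < j → (j : ℕ) ≤ (i : ℕ) + t → χ (f i) (f j) = b) :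
    ∃ (b : Bool) (X Y : Finset (Fin N)),
      X.card = t ∧ Y.card = t ∧ MonoClique χ b X ∧ MonoClique χ b Y ∧
      (∃ z : Fin N, z ∈ X ∧ z ∈ Y ∧ (∀ a ∈ X, a ≤ z) ∧ (∀ c ∈ Y, z ≤ c)) ∧
      chiVal χ b t Y ≤ chiVal χ b t X := by
  classical
  have hlt : ∀ b ℓ X, EndsAt χ b t ℓ X → ℓ < n := by
    intro b ℓ X ⟨f, hf, hc, _⟩
    by_contra h
    push Not at h
    exact hno ⟨b, fun i => f (Fin.castLE h i), fun i j hij => hf (by simpa using hij),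
      fun i j hij hj => hc _ _ (by simpa using hij) (by simpa using hj)⟩
  have hbdd : ∀ b X, BddAbove {ℓ | EndsAt χ b t ℓ X} := fun b X =>
    ⟨n, fun ℓ h => (hlt b ℓ X h).le⟩
  have hends : ∀ b (X : Finset (Fin N)), X.card = t → MonoClique χ b X → EndsAt χ b t t X := by
    intro b X hk hc
    refine ⟨X.orderEmbOfFin hk, (X.orderEmbOfFin hk).strictMono, fun i j hij _ =>
      hc _ (X.orderEmbOfFin_mem hk i) _ (X.orderEmbOfFin_mem hk j)
        ((X.orderEmbOfFin hk).strictMono hij), fun x => ?_⟩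
    have := Finset.range_orderEmbOfFin X hk
    rw [← Finset.mem_coe, ← this, Set.mem_range]
    exact ⟨fun ⟨i, hi⟩ => ⟨i, by omega, hi⟩, fun ⟨i, _, hi⟩ => ⟨i, hi⟩⟩
  have hchi : ∀ b (X : Finset (Fin N)), X.card = t → MonoClique χ b X →
      t ≤ chiVal χ b t X ∧ chiVal χ b t X < n := by
    intro b X hk hc
    have h := hends b X hk hc
    exact ⟨le_csSup (hbdd b X) h, hlt b _ X (Nat.sSup_mem ⟨t, h⟩ (hbdd b X))⟩
  have htn : t < n := by
    rcases hn.lt_or_eq with h | h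
    · exact h
    exfalso
    have hR := ramsey_spec t t
    by_cases hRN : ramsey t t ≤ N
    · rcases hR (fun i j => χ (Fin.castLE hRN i) (Fin.castLE hRN j)) with
        ⟨f, hf, hc⟩ | ⟨f, hf, hc⟩
      · subst h
        exact hno ⟨true, fun i => Fin.castLE hRN (f i), fun i j hij => by simpa using hf hij,
          fun i j hij _ => hc i j hij⟩
      · subst h
        exact hno ⟨false, fun i => Fin.castLE hRN (f i), fun i j hij => by simpa using hf hij,
          fun i j hij _ => hc i j hij⟩
    · have : 1 ≤ n ^ 2 := Nat.one_le_pow _ _ (by omega)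
      have := Nat.le_mul_of_pos_right (ramsey t t - 1) this
      omega
  have htop : ∀ b v, topVal χ b t v < n := by
    intro b v
    unfold topVal
    rw [Finset.sup_lt_iff (show (⊥ : ℕ) < n from by simp; omega)]
    intro X hX
    have hX := (Finset.mem_filter.mp hX).2
    exact (hchi b X hX.1 hX.2.1).2
  obtain ⟨p, -, hp⟩ := Finset.exists_lt_card_fiber_of_mul_lt_card_of_maps_to
    (s := (Finset.univ : Finset (Fin N))) (t := Finset.range n ×ˢ Finset.range n)
    (f := fun v => (topVal χ true t v, topVal χ false t v)) (n := ramsey t t - 1)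
    (fun v _ => by simp [htop]) (by
      simp only [Finset.card_product, Finset.card_range, Finset.card_univ, Fintype.card_fin]
      nlinarith)
  set S := (Finset.univ : Finset (Fin N)).filter
    (fun v => (topVal χ true t v, topVal χ false t v) = p) with hS
  have hsame : ∀ b, ∀ v ∈ S, ∀ w ∈ S, topVal χ b t v = topVal χ b t w := by
    intro b v hv w hw
    have hv := (Finset.mem_filter.mp hv).2
    have hw := (Finset.mem_filter.mp hw).2
    have h := hv.trans hw.symm
    cases b
    · exact (Prod.mk.inj h).2
    · exact (Prod.mk.inj h).1
  have hRS : ramsey t t ≤ S.card := by omega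
  have hY : ∃ (b : Bool) (Y : Finset (Fin N)), Y ⊆ S ∧ Y.card = t ∧ MonoClique χ b Y := by
    let e : Fin (ramsey t t) → Fin N := fun i => S.orderEmbOfFin rfl (Fin.castLE hRS i)
    have he : StrictMono e := fun i j hij => (S.orderEmbOfFin rfl).strictMono (by simpa using hij)
    have key : ∀ (b : Bool) (f : Fin t → Fin (ramsey t t)), StrictMono f →
        (∀ i j : Fin t, i < j → χ (e (f i)) (e (f j)) = b) →
        ∃ (b : Bool) (Y : Finset (Fin N)), Y ⊆ S ∧ Y.card = t ∧ MonoClique χ b Y := by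
      intro b f hf hc
      have hm : StrictMono (fun i => e (f i)) := he.comp hf
      refine ⟨b, Finset.univ.image (fun i => e (f i)), ?_, ?_, ?_⟩
      · intro x hx
        obtain ⟨i, -, rfl⟩ := Finset.mem_image.mp hx
        exact S.orderEmbOfFin_mem rfl _
      · rw [Finset.card_image_of_injective _ hm.injective]; simp
      · intro x hx y hy hxy
        obtain ⟨i, -, rfl⟩ := Finset.mem_image.mp hx
        obtain ⟨j, -, rfl⟩ := Finset.mem_image.mp hy
        exact hc i j (hm.lt_iff_lt.mp hxy)
    rcases ramsey_spec t t (fun i j => χ (e i) (e j)) with ⟨f, hf, hc⟩ | ⟨f, hf, hc⟩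
    · exact key true f hf hc
    · exact key false f hf hc
  obtain ⟨b, Y, hYS, hYk, hYc⟩ := hY
  have hne : Y.Nonempty := Finset.card_pos.mp (by omega)
  set z := Y.min' hne
  set w := Y.max' hne
  have hz : z ∈ Y := Y.min'_mem hne
  have hw : w ∈ Y := Y.max'_mem hne
  have h1 : chiVal χ b t Y ≤ topVal χ b t w :=
    Finset.le_sup (f := chiVal χ b t) (Finset.mem_filter.mpr
      ⟨Finset.mem_univ _, hYk, hYc, hw, fun a ha => Y.le_max' a ha⟩)
  rw [← hsame b z (hYS hz) w (hYS hw)] at h1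
  have hYt := (hchi b Y hYk hYc).1
  have hfne : (Finset.univ.filter (CliqueTop χ b t z)).Nonempty := by
    by_contra h
    rw [Finset.not_nonempty_iff_eq_empty] at h
    unfold topVal at h1
    rw [h] at h1
    simp at h1
    omega
  obtain ⟨X, hX, hXe⟩ := Finset.exists_mem_eq_sup _ hfne (chiVal χ b t)
  obtain ⟨hXk, hXc, hzX, hXz⟩ := (Finset.mem_filter.mp hX).2
  refine ⟨b, X, Y, hXk, hYk, hXc, hYc, ⟨z, hzX, hz, hXz, fun c hc => Y.min'_le c hc⟩, ?_⟩
  rw [← hXe]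
  exact h1
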